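/- Let A, B, C be nonempty pairwise disjoint sets forming a partition of M ⊆ V. Then the table 𝔛_M is strictly collapsible over A into 𝔛_{B∪C} with respect to λ_{B'}^M, λ_{C'}^M and λ_{B'∪C'}^M for every nonempty B' ⊆ B and nonempty C' ⊆ C, if and only if X_A ⟂ (X_B, X_C), i.e., p_M(x) = p_A(x_A)·p_{B∪C}(x_{B∪C}) for all x ∈ 𝔛_M. -/

import Mathlib

open Finset

variable {V : Type*} [Fintype V] [DecidableEq V]
variable {𝔛 : V → Type*} [∀ v, Fintype (𝔛 v)] [∀ v, DecidableEq (𝔛 v)]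
  [∀ v, Nonempty (𝔛 v)]

/-- The marginal `p_A` of a distribution `p` on the full table, evaluated at the
`A`-coordinates of `x`. -/
noncomputable def margin (p : (∀ v, 𝔛 v) → ℝ) (A : Finset V) (x : ∀ v, 𝔛 v) : ℝ :=
  ∑ y ∈ Finset.univ.filter (fun y : ∀ v, 𝔛 v => ∀ v ∈ A, y v = x v), p y

/-- `ν_L^M(x_L) = (1/|𝔛_{M∖L}|) Σ_{j ∈ 𝔛_M : j_L = x_L} log p_M(j)`, written with sums over
full configurations (for `L ⊆ M` the extra coordinates cancel against the normalization). -/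
noncomputable def nu (p : (∀ v, 𝔛 v) → ℝ) (L M : Finset V) (x : ∀ v, 𝔛 v) : ℝ :=
  (∏ v ∈ Lᶜ, (Fintype.card (𝔛 v) : ℝ))⁻¹ *
    ∑ j ∈ Finset.univ.filter (fun j : ∀ v, 𝔛 v => ∀ v ∈ L, j v = x v),
      Real.log (margin p M j)

/-- The marginal log-linear parameter `λ_L^M(x_L) = Σ_{L' ⊆ L} (−1)^{|L∖L'|} ν_{L'}^M(x_{L'})`. -/
noncomputable def mll (p : (∀ v, 𝔛 v) → ℝ) (L M : Finset V) (x : ∀ v, 𝔛 v) : ℝ :=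
  ∑ L' ∈ L.powerset, (-1 : ℝ) ^ ((L \ L').card) * nu p L' M x

/-- `𝔛_N` is strictly collapsible over `N ∖ M'` into `𝔛_{M'}` with respect to `λ_L^N`:
`λ_L^{M'} = λ_L^N` and `λ_Z^N = 0` for every `Z ⊆ N` with `L ⊊ Z` meeting `N ∖ M'`. -/
def StrictlyCollapsible (p : (∀ v, 𝔛 v) → ℝ) (N M' L : Finset V) : Prop :=
  (∀ x : ∀ v, 𝔛 v, mll p L M' x = mll p L N x) ∧
  (∀ Z ⊆ N, L ⊂ Z → (Z ∩ (N \ M')).Nonempty → ∀ x : ∀ v, 𝔛 v, mll p Z N x = 0)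

/-- Averaging operator. -/
noncomputable def avgE (f : (∀ v, 𝔛 v) → ℝ) (L : Finset V) (x : ∀ v, 𝔛 v) : ℝ :=
  (∏ v ∈ Lᶜ, (Fintype.card (𝔛 v) : ℝ))⁻¹ *
    ∑ j ∈ Finset.univ.filter (fun j : ∀ v, 𝔛 v => ∀ v ∈ L, j v = x v), f j

/-- Moebius transform of a set function. -/
noncomputable def mob {V : Type*} [DecidableEq V] (g : Finset V → ℝ) (L : Finset V) : ℝ :=
  ∑ L' ∈ L.powerset, (-1 : ℝ) ^ ((L \ L').card) * g L'

theorem mll_eq_mob (p : (∀ v, 𝔛 v) → ℝ) (L M : Finset V) (x : ∀ v, 𝔛 v) :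
    mll p L M x = mob (fun L' => avgE (fun j => Real.log (margin p M j)) L' x) L := rfl

theorem mob_insert {V : Type*} [DecidableEq V] (g : Finset V → ℝ) (a : V) (L : Finset V)
    (ha : a ∉ L) :
    mob g (insert a L) = mob (fun T => g (insert a T)) L - mob g L := by
  unfold mob
  rw [Finset.sum_powerset_insert ha, add_comm, sub_eq_add_neg, ← Finset.sum_neg_distrib]
  congr 1
  · refine Finset.sum_congr rfl fun t ht => ?_
    have h1 : insert a L \ insert a t = L \ t := by
      ext v; simp only [Finset.mem_sdiff, Finset.mem_insert]
      by_cases hv : v = a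
      · subst hv; simp [ha]
      · simp [hv]
    rw [h1]
  · refine Finset.sum_congr rfl fun t ht => ?_
    have hat : a ∉ t := fun h => ha (Finset.mem_powerset.1 ht h)
    rw [Finset.insert_sdiff_of_notMem _ hat, Finset.card_insert_of_notMem (by simp [ha])]
    ring

theorem sum_mob {V : Type*} [DecidableEq V] (M : Finset V) :
    ∀ g : Finset V → ℝ, ∑ L ∈ M.powerset, mob g L = g M := by
  induction M using Finset.induction_on with
  | empty => intro g; simp [mob]
  | insert a M ha ih =>
    intro g
    rw [Finset.sum_powerset_insert ha]
    have : ∑ t ∈ M.powerset, mob g (insert a t)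
        = ∑ t ∈ M.powerset, (mob (fun T => g (insert a T)) t - mob g t) := by
      refine Finset.sum_congr rfl fun t ht => ?_
      exact mob_insert g a t fun h => ha (Finset.mem_powerset.1 ht h)
    rw [this, Finset.sum_sub_distrib, ih, ih]
    ring

theorem mob_add {V : Type*} [DecidableEq V] (g h : Finset V → ℝ) (L : Finset V) :
    mob (fun T => g T + h T) L = mob g L + mob h L := by
  simp [mob, mul_add, Finset.sum_add_distrib]

theorem mob_sub {V : Type*} [DecidableEq V] (g h : Finset V → ℝ) (L : Finset V) :
    mob (fun T => g T - h T) L = mob g L - mob h L := by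
  simp [mob, mul_sub, Finset.sum_sub_distrib]

theorem mob_eq_zero {V : Type*} [DecidableEq V] (g : Finset V → ℝ) (a : V) (L : Finset V)
    (ha : a ∈ L) (hg : ∀ T, a ∉ T → g (insert a T) = g T) : mob g L = 0 := by
  rw [← Finset.insert_erase ha, mob_insert g a _ (Finset.notMem_erase a L), sub_eq_zero]
  unfold mob
  refine Finset.sum_congr rfl fun t ht => ?_
  have hat : a ∉ t := fun h => Finset.notMem_erase a L (Finset.mem_powerset.1 ht h)
  simp only [hg t hat]

theorem avgE_add (f g : (∀ v, 𝔛 v) → ℝ) (L : Finset V) (x : ∀ v, 𝔛 v) :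
    avgE (fun j => f j + g j) L x = avgE f L x + avgE g L x := by
  simp [avgE, mul_add, Finset.sum_add_distrib]

theorem avgE_sub (f g : (∀ v, 𝔛 v) → ℝ) (L : Finset V) (x : ∀ v, 𝔛 v) :
    avgE (fun j => f j - g j) L x = avgE f L x - avgE g L x := by
  simp [avgE, mul_sub, Finset.sum_sub_distrib]

theorem avgE_congr (f : (∀ v, 𝔛 v) → ℝ) (L : Finset V) (x y : ∀ v, 𝔛 v)
    (h : ∀ v ∈ L, x v = y v) : avgE f L x = avgE f L y := by
  unfold avgE
  congr 2
  ext j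
  simp only [Finset.mem_filter, Finset.mem_univ, true_and]
  exact forall₂_congr fun v hv => by rw [h v hv]

theorem avgE_self (f : (∀ v, 𝔛 v) → ℝ) (L : Finset V) (x : ∀ v, 𝔛 v)
    (h : ∀ y, (∀ v ∈ L, y v = x v) → f y = f x) : avgE f L x = f x := by
  unfold avgE
  rw [Finset.sum_congr rfl (g := fun _ => f x) fun y hy => h y (Finset.mem_filter.1 hy).2]
  have hc : Finset.univ.filter (fun j : ∀ v, 𝔛 v => ∀ v ∈ L, j v = x v)
      = Fintype.piFinset (fun v => if v ∈ L then {x v} else Finset.univ) := by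
    ext j
    simp only [Finset.mem_filter, Finset.mem_univ, true_and, Fintype.mem_piFinset]
    refine forall_congr' fun v => ?_
    by_cases hv : v ∈ L <;> simp [hv]
  have hcard : ((Finset.univ.filter (fun j : ∀ v, 𝔛 v => ∀ v ∈ L, j v = x v)).card : ℝ)
      = ∏ v ∈ Lᶜ, (Fintype.card (𝔛 v) : ℝ) := by
    rw [hc, Fintype.card_piFinset, ← Finset.prod_mul_prod_compl L]
    rw [Finset.prod_eq_one (s := L) (fun v hv => by simp [hv]), one_mul]
    push_cast
    refine Finset.prod_congr rfl fun v hv => ?_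
    rw [if_neg (Finset.mem_compl.1 hv), Finset.card_univ]
  rw [Finset.sum_const, nsmul_eq_mul, hcard, ← mul_assoc, inv_mul_cancel₀, one_mul]
  exact Finset.prod_ne_zero_iff.2 fun v _ => by exact_mod_cast Fintype.card_ne_zero

theorem avgE_insert (f : (∀ v, 𝔛 v) → ℝ) (a : V) (L : Finset V) (x : ∀ v, 𝔛 v)
    (ha : a ∉ L) (h : ∀ y b, f (Function.update y a b) = f y) :
    avgE f (insert a L) x = avgE f L x := by
  have key : ∑ j ∈ Finset.univ.filter (fun j : ∀ v, 𝔛 v => ∀ v ∈ L, j v = x v), f j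
      = (Fintype.card (𝔛 a) : ℝ) *
        ∑ j ∈ Finset.univ.filter (fun j : ∀ v, 𝔛 v => ∀ v ∈ insert a L, j v = x v), f j := by
    have : (Fintype.card (𝔛 a) : ℝ) *
        ∑ j ∈ Finset.univ.filter (fun j : ∀ v, 𝔛 v => ∀ v ∈ insert a L, j v = x v), f j
        = ∑ q ∈ (Finset.univ : Finset (𝔛 a)) ×ˢ
          Finset.univ.filter (fun j : ∀ v, 𝔛 v => ∀ v ∈ insert a L, j v = x v), f q.2 := by
      rw [Finset.sum_product]
      simp
    rw [this]
    refine Finset.sum_bij' (fun j _ => (j a, Function.update j a (x a)))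
      (fun q _ => Function.update q.2 a q.1) ?_ ?_ ?_ ?_ ?_
    · intro j hj
      simp only [Finset.mem_filter, Finset.mem_univ, true_and, Finset.mem_product] at hj ⊢
      intro v hv
      by_cases hva : v = a
      · subst hva; simp
      · rw [Function.update_of_ne hva]
        exact hj v (Finset.mem_of_mem_insert_of_ne hv hva)
    · intro q hq
      simp only [Finset.mem_filter, Finset.mem_univ, true_and, Finset.mem_product] at hq ⊢
      intro v hv
      have hva : v ≠ a := fun e => ha (e ▸ hv)
      rw [Function.update_of_ne hva]
      exact hq v (Finset.mem_insert_of_mem hv)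
    · intro j hj
      simp
    · intro q hq
      simp only [Finset.mem_filter, Finset.mem_univ, true_and, Finset.mem_product] at hq
      have := hq a (Finset.mem_insert_self a L)
      ext1
      · simp
      · simp [← this]
    · intro j hj
      simp [h]
  unfold avgE
  rw [key]
  have hprod : ∏ v ∈ Lᶜ, (Fintype.card (𝔛 v) : ℝ)
      = (Fintype.card (𝔛 a) : ℝ) * ∏ v ∈ (insert a L)ᶜ, (Fintype.card (𝔛 v) : ℝ) := by
    rw [Finset.compl_insert, Finset.mul_prod_erase _ (fun v => (Fintype.card (𝔛 v) : ℝ)) (Finset.mem_compl.2 ha)]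
  have hne : (Fintype.card (𝔛 a) : ℝ) ≠ 0 := by exact_mod_cast Fintype.card_ne_zero
  rw [hprod, mul_inv]
  field_simp

theorem margin_congr (p : (∀ v, 𝔛 v) → ℝ) (S : Finset V) (x y : ∀ v, 𝔛 v)
    (h : ∀ v ∈ S, x v = y v) : margin p S x = margin p S y := by
  unfold margin
  congr 1
  ext j
  simp only [Finset.mem_filter, Finset.mem_univ, true_and]
  exact forall₂_congr fun v hv => by rw [h v hv]

theorem margin_pos (p : (∀ v, 𝔛 v) → ℝ) (hp : ∀ x, 0 < p x) (S : Finset V) (x : ∀ v, 𝔛 v) :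
    0 < margin p S x :=
  Finset.sum_pos (fun y _ => hp y) ⟨x, by simp⟩

/-- The parameter for the margin `S` vanishes on sets not contained in `S`. -/
theorem mll_eq_zero (p : (∀ v, 𝔛 v) → ℝ) (L S : Finset V) (x : ∀ v, 𝔛 v) (a : V)
    (haL : a ∈ L) (haS : a ∉ S) : mll p L S x = 0 := by
  rw [mll_eq_mob]
  refine mob_eq_zero _ a L haL fun T hT => avgE_insert _ a T x hT fun y b => ?_
  rw [margin_congr p S (Function.update y a b) y]
  intro v hv
  have hva : v ≠ a := fun e => haS (e ▸ hv)
  exact Function.update_of_ne hva _ _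

theorem sum_margin (p : (∀ v, 𝔛 v) → ℝ) (S T : Finset V) (hST : S ⊆ T) (x : ∀ v, 𝔛 v) :
    ∑ j ∈ Finset.univ.filter (fun j : ∀ v, 𝔛 v => ∀ v, v ∉ S → j v = x v), margin p T j
      = margin p (T \ S) x := by
  unfold margin
  rw [← Finset.sum_fiberwise_of_maps_to (s := Finset.univ.filter
      (fun y : ∀ v, 𝔛 v => ∀ v ∈ T \ S, y v = x v)) (g := fun y : ∀ v, 𝔛 v => S.piecewise y x)
    (t := Finset.univ.filter (fun j : ∀ v, 𝔛 v => ∀ v, v ∉ S → j v = x v))]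
  · refine Finset.sum_congr rfl fun j hj => Finset.sum_congr ?_ fun _ _ => rfl
    simp only [Finset.mem_filter, Finset.mem_univ, true_and] at hj
    ext y
    simp only [Finset.mem_filter, Finset.mem_univ, true_and, Finset.mem_sdiff]
    constructor
    · intro hy
      refine ⟨fun v hv => (hy v hv.1).trans (hj v hv.2), ?_⟩
      funext v
      by_cases hv : v ∈ S
      · rw [Finset.piecewise_eq_of_mem _ _ _ hv, hy v (hST hv)]
      · rw [Finset.piecewise_eq_of_notMem _ _ _ hv, hj v hv]
    · rintro ⟨h1, h2⟩ v hv
      by_cases hvS : v ∈ S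
      · rw [← h2, Finset.piecewise_eq_of_mem _ _ _ hvS]
      · rw [h1 v ⟨hv, hvS⟩, hj v hvS]
  · intro y _
    simp only [Finset.mem_filter, Finset.mem_univ, true_and]
    intro v hv
    exact Finset.piecewise_eq_of_notMem _ _ _ hv

theorem indep_of_vanish (p : (∀ v, 𝔛 v) → ℝ) (hp : ∀ x, 0 < p x) (hsum : ∑ x, p x = 1)
    (A S : Finset V) (hAS : Disjoint A S)
    (h : ∀ L ⊆ A ∪ S, (∃ a ∈ L, a ∈ S) → ∀ x, mll p L (A ∪ S) x = mll p L S x)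
    (x : ∀ v, 𝔛 v) : margin p (A ∪ S) x = margin p A x * margin p S x := by
  set D : (∀ v, 𝔛 v) → ℝ :=
    fun j => Real.log (margin p (A ∪ S) j) - Real.log (margin p S j) with hD
  have hlam : ∀ L ⊆ A ∪ S, (∃ a ∈ L, a ∈ S) → ∀ x, mob (fun T => avgE D T x) L = 0 := by
    intro L hL ha x
    have : (fun T => avgE D T x) = fun T =>
        avgE (fun j => Real.log (margin p (A ∪ S) j)) T x
          - avgE (fun j => Real.log (margin p S j)) T x := by
      funext T; exact avgE_sub _ _ T x
    rw [this, mob_sub, ← mll_eq_mob, ← mll_eq_mob, h L hL ha x, sub_self]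
  have hDA : ∀ x, D x = avgE D A x := by
    intro x
    have h1 : avgE D (A ∪ S) x = D x := by
      refine avgE_self _ _ _ fun y hy => ?_
      simp only [hD]
      rw [margin_congr p (A ∪ S) y x hy,
        margin_congr p S y x fun v hv => hy v (Finset.mem_union_right _ hv)]
    rw [← h1, ← sum_mob (A ∪ S) (fun T => avgE D T x), ← sum_mob A (fun T => avgE D T x)]
    symm
    refine Finset.sum_subset (Finset.powerset_mono.2 Finset.subset_union_left) ?_
    intro L hL hLA
    rw [Finset.mem_powerset] at hL hLA
    obtain ⟨a, haL, haA⟩ := Finset.not_subset.1 hLA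
    exact hlam L hL ⟨a, haL, (Finset.mem_union.1 (hL haL)).resolve_left haA⟩ x
  have hexp : ∀ j, margin p (A ∪ S) j = Real.exp (D j) * margin p S j := by
    intro j
    simp only [hD]
    rw [Real.exp_sub, Real.exp_log (margin_pos p hp _ _), Real.exp_log (margin_pos p hp _ _),
      div_mul_cancel₀ _ (margin_pos p hp _ _).ne']
  have e1 := sum_margin p S (A ∪ S) Finset.subset_union_right x
  have e2 := sum_margin p S S (Finset.Subset.refl S) x
  have hT : (A ∪ S) \ S = A := by
    rw [Finset.union_sdiff_right, Finset.sdiff_eq_self_of_disjoint hAS]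
  have h0 : margin p (S \ S) x = 1 := by
    rw [Finset.sdiff_self]; simpa [margin] using hsum
  rw [hT] at e1
  rw [h0] at e2
  have e3 : ∑ j ∈ Finset.univ.filter (fun j : ∀ v, 𝔛 v => ∀ v, v ∉ S → j v = x v),
      margin p (A ∪ S) j = Real.exp (D x) *
      ∑ j ∈ Finset.univ.filter (fun j : ∀ v, 𝔛 v => ∀ v, v ∉ S → j v = x v), margin p S j := by
    rw [Finset.mul_sum]
    refine Finset.sum_congr rfl fun j hj => ?_
    simp only [Finset.mem_filter, Finset.mem_univ, true_and] at hj
    rw [hexp j, hDA j, hDA x, avgE_congr D A j x fun v hv => hj v (Finset.disjoint_left.1 hAS hv)]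
  rw [e1, e2, mul_one] at e3
  rw [e3, hexp x]

theorem mll_of_indep (p : (∀ v, 𝔛 v) → ℝ) (hp : ∀ x, 0 < p x) (A S M : Finset V)
    (h : ∀ x, margin p M x = margin p A x * margin p S x) (L : Finset V) (x : ∀ v, 𝔛 v) :
    mll p L M x = mll p L A x + mll p L S x := by
  rw [mll_eq_mob, mll_eq_mob, mll_eq_mob, ← mob_add]
  congr 1
  funext T
  rw [← avgE_add]
  congr 1
  funext j
  rw [h j, Real.log_mul (margin_pos p hp _ _).ne' (margin_pos p hp _ _).ne']

theorem strict_of_indep (p : (∀ v, 𝔛 v) → ℝ) (hp : ∀ x, 0 < p x) (A S : Finset V)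
    (hAS : Disjoint A S)
    (h : ∀ x, margin p (A ∪ S) x = margin p A x * margin p S x) (L : Finset V)
    (hL : L ⊆ S) (hne : L.Nonempty) : StrictlyCollapsible p (A ∪ S) S L := by
  obtain ⟨a, ha⟩ := hne
  have haA : a ∉ A := Finset.disjoint_right.1 hAS (hL ha)
  refine ⟨fun x => ?_, fun Z hZ hLZ hZn x => ?_⟩
  · rw [mll_of_indep p hp A S _ h, mll_eq_zero p L A x a ha haA, zero_add]
  · obtain ⟨b, hb⟩ := hZn
    simp only [Finset.mem_inter, Finset.mem_sdiff] at hb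
    rw [mll_of_indep p hp A S _ h, mll_eq_zero p Z A x a (hLZ.1 ha) haA,
      mll_eq_zero p Z S x b hb.1 hb.2.2, zero_add]

theorem stmt13 (p : (∀ v, 𝔛 v) → ℝ) (hp : ∀ x, 0 < p x) (hsum : ∑ x, p x = 1)
    (A B C M : Finset V) (hA : A.Nonempty) (hB : B.Nonempty) (hC : C.Nonempty)
    (hAB : Disjoint A B) (hAC : Disjoint A C) (hBC : Disjoint B C)
    (hM : M = A ∪ B ∪ C) :
    ((∀ B' ⊆ B, B'.Nonempty → StrictlyCollapsible p M (B ∪ C) B') ∧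
     (∀ C' ⊆ C, C'.Nonempty → StrictlyCollapsible p M (B ∪ C) C') ∧
     (∀ B' ⊆ B, B'.Nonempty → ∀ C' ⊆ C, C'.Nonempty →
       StrictlyCollapsible p M (B ∪ C) (B' ∪ C'))) ↔
    (∀ x : ∀ v, 𝔛 v, margin p M x = margin p A x * margin p (B ∪ C) x) := by
  have hM' : M = A ∪ (B ∪ C) := by rw [hM, Finset.union_assoc]
  have hAS : Disjoint A (B ∪ C) := Finset.disjoint_union_right.2 ⟨hAB, hAC⟩
  subst hM'
  constructor
  · rintro ⟨h1, h2, h3⟩ x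
    have hall : ∀ L ⊆ B ∪ C, L.Nonempty → StrictlyCollapsible p (A ∪ (B ∪ C)) (B ∪ C) L := by
      intro L hL hne
      have hu : L = (L ∩ B) ∪ (L ∩ C) := by
        rw [← Finset.inter_union_distrib_left, Finset.inter_eq_left.2 hL]
      rcases Finset.eq_empty_or_nonempty (L ∩ B) with hb | hb
      · rw [hb, Finset.empty_union] at hu
        exact h2 L (hu ▸ Finset.inter_subset_right) hne
      · rcases Finset.eq_empty_or_nonempty (L ∩ C) with hc | hc
        · rw [hc, Finset.union_empty] at hu
          exact h1 L (hu ▸ Finset.inter_subset_right) hne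
        · rw [hu]
          exact h3 _ Finset.inter_subset_right hb _ Finset.inter_subset_right hc
    refine indep_of_vanish p hp hsum A (B ∪ C) hAS ?_ x
    rintro L hL ⟨a, haL, haS⟩ y
    by_cases hLS : L ⊆ B ∪ C
    · exact ((hall L hLS ⟨a, haL⟩).1 y).symm
    · obtain ⟨b, hbL, hbS⟩ := Finset.not_subset.1 hLS
      rw [mll_eq_zero p L (B ∪ C) y b hbL hbS]
      refine (hall (L ∩ (B ∪ C)) Finset.inter_subset_right
        ⟨a, Finset.mem_inter.2 ⟨haL, haS⟩⟩).2 L hL ?_ ?_ y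
      · refine ⟨Finset.inter_subset_left, fun hh => hbS (Finset.mem_inter.1 (hh hbL)).2⟩
      · exact ⟨b, Finset.mem_inter.2 ⟨hbL, Finset.mem_sdiff.2 ⟨hL hbL, hbS⟩⟩⟩
  · intro h
    refine ⟨fun B' hB' hn => ?_, fun C' hC' hn => ?_, fun B' hB' hn C' hC' _ => ?_⟩
    · exact strict_of_indep p hp A _ hAS h B' (hB'.trans Finset.subset_union_left) hn
    · exact strict_of_indep p hp A _ hAS h C' (hC'.trans Finset.subset_union_right) hn
    · exact strict_of_indep p hp A _ hAS h (B' ∪ C') (Finset.union_subset_union hB' hC')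
        (hn.mono Finset.subset_union_left)
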